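/- Let A be a C*-algebra and let I₁ ⊆ J₁ and I₂ ⊆ J₂ be closed two-sided ideals of A such that the corresponding locally closed subsets of Prim(A) coincide: U_{J₁} \ U_{I₁} = U_{J₂} \ U_{I₂}. Then J₁ + J₂ = J₁ + I₂ and I₁ = (I₁ + I₂) ∩ J₁; consequently, the inclusion J₁ ↪ J₁ + J₂ induces an isomorphism J₁/I₁ ≅ (J₁ + J₂)/(I₁ + I₂). -/

import Mathlib

open scoped Pointwise

universe u

/-- A subset of a C*-algebra is a closed two-sided ideal. -/
def IsClosedTwoSidedIdeal {A : Type u} [NonUnitalCStarAlgebra A] (S : Set A) : Prop :=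
  IsClosed S ∧ (0 : A) ∈ S ∧ (∀ x ∈ S, ∀ y ∈ S, x + y ∈ S) ∧ (∀ x ∈ S, -x ∈ S) ∧
    (∀ a : A, ∀ x ∈ S, a * x ∈ S ∧ x * a ∈ S)

/-- A witness that `P` is a primitive ideal: `P` is the kernel of a non-zero
topologically irreducible *-representation of `A` on a Hilbert space. -/
structure PrimitiveWitness (A : Type u) [NonUnitalCStarAlgebra A] (P : Set A) where
  H : Type u
  [instN : NormedAddCommGroup H]
  [instI : InnerProductSpace ℂ H]
  [instC : CompleteSpace H]
  π : A →⋆ₙₐ[ℂ] (H →L[ℂ] H)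
  nonzero : ∃ a : A, π a ≠ 0
  irreducible : ∀ S : Submodule ℂ H, IsClosed (S : Set H) →
    (∀ a : A, ∀ x ∈ S, π a x ∈ S) → S = ⊥ ∨ S = ⊤
  ker_eq : P = {a : A | π a = 0}

/-- `P` is a primitive ideal of `A`. -/
def IsPrimitiveIdeal (A : Type u) [NonUnitalCStarAlgebra A] (P : Set A) : Prop :=
  Nonempty (PrimitiveWitness A P)

/-!
A closed ideal `I` is the intersection of the primitive ideals containing it. For `b ∉ I`, separate
`-star b * b` from the closed cone generated by `I` and the positive elements: this gives a state
that vanishes on `I` but not at `star b * b`. By Krein–Milman it can be taken extreme among the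
states vanishing on `I`; such a state is pure, and the kernel of its irreducible GNS representation
contains `I` but not `b`. Sums of closed ideals are closed, by a norm-controlled decomposition built
from local units, so inclusions between `I₁ + I₂`, `J₁ + I₂`, ... can be tested on primitive ideals.
-/

section LocalUnits

variable {A : Type*} [NonUnitalCStarAlgebra A]

theorem abs_sub_mul_mul_div_sq_add_sq_le (t : ℝ) {c : ℝ} (hc : 0 < c) :
    |t - t * (t * (t / (t ^ 2 + c ^ 2)))| ≤ c := by
  have hden : 0 < t ^ 2 + c ^ 2 := by positivity
  have : t - t * (t * (t / (t ^ 2 + c ^ 2))) = t * c ^ 2 / (t ^ 2 + c ^ 2) := by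
    field_simp
    ring
  rw [this, abs_le, le_div_iff₀ hden, div_le_iff₀ hden]
  constructor <;> nlinarith [mul_nonneg hc.le (sq_nonneg (t - c)),
    mul_nonneg hc.le (sq_nonneg (t + c))]

-- The local unit is `f(a)` with `f t = t ^ 2 / (t ^ 2 + c ^ 2)`.
theorem exists_isSelfAdjoint_mul_norm_sub_le {a : A} (ha : IsSelfAdjoint a)
    {c : ℝ} (hc : 0 < c) :
    ∃ y, IsSelfAdjoint (a * y) ∧ ‖a * y‖ ≤ 1 ∧ ‖a - a * (a * y)‖ ≤ c := by
  have hden (t : ℝ) : 0 < t ^ 2 + c ^ 2 := by positivity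
  let g : ℝ → ℝ := fun t ↦ t / (t ^ 2 + c ^ 2)
  let f : ℝ → ℝ := fun t ↦ t * g t
  have hg : Continuous g := continuous_id.div (by fun_prop) fun t ↦ (hden t).ne'
  have hf : Continuous f := continuous_id.mul hg
  have cfcₙ_id_mul {h : ℝ → ℝ} (hh : Continuous h) (h0 : h 0 = 0) :
      cfcₙ (fun t ↦ t * h t) a = a * cfcₙ h a := by
    rw [cfcₙ_mul (fun t ↦ t) h a (by fun_prop) rfl hh.continuousOn h0, cfcₙ_id' ℝ a]
  have hfa : cfcₙ f a = a * cfcₙ g a := cfcₙ_id_mul hg (by simp [g])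
  have hsub : a - a * cfcₙ f a = cfcₙ (fun t ↦ t - t * f t) a := by
    rw [cfcₙ_sub (fun t ↦ t) (fun t ↦ t * f t) a (by fun_prop) rfl (by fun_prop) (by simp),
      cfcₙ_id_mul hf (by simp [f]), cfcₙ_id' ℝ a]
  refine ⟨cfcₙ g a, hfa ▸ cfcₙ_predicate f a, hfa ▸ norm_cfcₙ_le fun t _ ↦ ?_, hfa ▸ ?_⟩
  · have : f t = t ^ 2 / (t ^ 2 + c ^ 2) := by simp only [f, g]; ring
    rw [this, Real.norm_of_nonneg (by positivity), div_le_one (hden t)]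
    exact le_add_of_nonneg_right (by positivity)
  · rw [hsub]
    exact norm_cfcₙ_le fun t _ ↦ abs_sub_mul_mul_div_sq_add_sq_le t hc

-- If `a = star x * x` and `e` is a self-adjoint local unit for `a`, then
-- `‖x - x * e‖ ^ 2 = ‖(1 - e) * a * (1 - e)‖ ≤ 2 * ‖a - a * e‖`.
theorem exists_isSelfAdjoint_star_mul_self_mul_norm_sub_le (x : A) {ε : ℝ} (hε : 0 < ε) :
    ∃ y, IsSelfAdjoint (star x * x * y) ∧ ‖star x * x * y‖ ≤ 1 ∧
      ‖x - x * (star x * x * y)‖ ≤ ε := by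
  obtain ⟨y, he_sa, he_norm, hae⟩ :=
    exists_isSelfAdjoint_mul_norm_sub_le (.star_mul_self x) (half_pos (pow_pos hε 2))
  refine ⟨y, he_sa, he_norm, le_of_sq_le_sq ?_ hε.le⟩
  set a := star x * x with ha
  set e := a * y
  calc ‖x - x * e‖ ^ 2 = ‖(a - a * e) - e * (a - a * e)‖ := by
        rw [sq, ← CStarRing.norm_star_mul_self, star_sub, star_mul, he_sa.star_eq, ha]
        noncomm_ring
    _ ≤ ‖a - a * e‖ + ‖e‖ * ‖a - a * e‖ :=
        (norm_sub_le _ _).trans (by gcongr; exact norm_mul_le _ _)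
    _ ≤ ε ^ 2 / 2 + 1 * (ε ^ 2 / 2) := by gcongr
    _ = ε ^ 2 := by ring

end LocalUnits

namespace IsClosedTwoSidedIdeal

variable {A : Type u} [NonUnitalCStarAlgebra A] {I : Set A}

theorem isClosed (hI : IsClosedTwoSidedIdeal I) : IsClosed I := hI.1

theorem zero_mem (hI : IsClosedTwoSidedIdeal I) : (0 : A) ∈ I := hI.2.1

theorem add_mem (hI : IsClosedTwoSidedIdeal I) {x y : A} (hx : x ∈ I) (hy : y ∈ I) : x + y ∈ I :=
  hI.2.2.1 x hx y hy

theorem neg_mem (hI : IsClosedTwoSidedIdeal I) {x : A} (hx : x ∈ I) : -x ∈ I := hI.2.2.2.1 x hx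

theorem mul_mem_left (hI : IsClosedTwoSidedIdeal I) (a : A) {x : A} (hx : x ∈ I) : a * x ∈ I :=
  (hI.2.2.2.2 a x hx).1

theorem mul_mem_right (hI : IsClosedTwoSidedIdeal I) (a : A) {x : A} (hx : x ∈ I) : x * a ∈ I :=
  (hI.2.2.2.2 a x hx).2

/-- The additive subgroup underlying a closed two-sided ideal. -/
def toAddSubgroup (hI : IsClosedTwoSidedIdeal I) : AddSubgroup A where
  carrier := I
  add_mem' := hI.add_mem
  zero_mem' := hI.zero_mem
  neg_mem' := hI.neg_mem

theorem exists_mem_norm_sub_mul_le (hI : IsClosedTwoSidedIdeal I) {x : A} (hx : x ∈ I)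
    {ε : ℝ} (hε : 0 < ε) : ∃ e ∈ I, IsSelfAdjoint e ∧ ‖e‖ ≤ 1 ∧ ‖x - x * e‖ ≤ ε := by
  obtain ⟨y, hsa, hnorm, hxy⟩ := exists_isSelfAdjoint_star_mul_self_mul_norm_sub_le x hε
  exact ⟨_, hI.mul_mem_right y (hI.mul_mem_left (star x) hx), hsa, hnorm, hxy⟩

theorem mem_of_forall_exists_norm_sub_le (hI : IsClosedTwoSidedIdeal I) {x : A}
    (h : ∀ ε > (0 : ℝ), ∃ y ∈ I, ‖x - y‖ ≤ ε) : x ∈ I := by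
  rw [← hI.isClosed.closure_eq, Metric.mem_closure_iff_infDist_zero ⟨0, hI.zero_mem⟩]
  refine le_antisymm (le_of_forall_pos_le_add fun ε hε ↦ ?_) Metric.infDist_nonneg
  obtain ⟨y, hy, hxy⟩ := h ε hε
  rw [zero_add]
  exact (Metric.infDist_le_dist_of_mem hy).trans ((dist_eq_norm x y).trans_le hxy)

theorem mem_of_star_mul_self_mem (hI : IsClosedTwoSidedIdeal I) {x : A} (hx : star x * x ∈ I) :
    x ∈ I :=
  hI.mem_of_forall_exists_norm_sub_le fun _ hε ↦
    let ⟨y, _, _, hxy⟩ := exists_isSelfAdjoint_star_mul_self_mul_norm_sub_le x hε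
    ⟨_, hI.mul_mem_left x (hI.mul_mem_right y hx), hxy⟩

theorem star_mem (hI : IsClosedTwoSidedIdeal I) {x : A} (hx : x ∈ I) : star x ∈ I := by
  refine hI.mem_of_star_mul_self_mem ?_
  rw [star_star]
  exact hI.mul_mem_right (star x) hx

theorem smul_mem (hI : IsClosedTwoSidedIdeal I) (c : ℂ) {x : A} (hx : x ∈ I) : c • x ∈ I := by
  refine hI.mem_of_star_mul_self_mem ?_
  rw [mul_smul_comm, ← smul_mul_assoc]
  exact hI.mul_mem_left (c • star (c • x)) hx

theorem realPart_mem (hI : IsClosedTwoSidedIdeal I) {x : A} (hx : x ∈ I) :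
    (realPart x : A) ∈ I := by
  rw [realPart_apply_coe, ← Complex.coe_smul]
  exact hI.smul_mem _ (hI.add_mem hx (hI.star_mem hx))

theorem imaginaryPart_mem (hI : IsClosedTwoSidedIdeal I) {x : A} (hx : x ∈ I) :
    (imaginaryPart x : A) ∈ I := by
  simpa using hI.neg_mem (hI.realPart_mem (hI.smul_mem Complex.I hx))

end IsClosedTwoSidedIdeal

section SumOfIdeals

theorem isClosed_sup_of_forall_exists_norm_le {G : Type*} [NormedAddCommGroup G]
    {H K : AddSubgroup G} [CompleteSpace H] [CompleteSpace K] {C : ℝ} (hC : 0 < C)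
    (hdecomp : ∀ x ∈ H, ∀ y ∈ K, ∃ x' ∈ H, ∃ y' ∈ K,
      x' + y' = x + y ∧ ‖x'‖ ≤ C * ‖x + y‖ ∧ ‖y'‖ ≤ C * ‖x + y‖) :
    IsClosed ((H ⊔ K : AddSubgroup G) : Set G) := by
  let s : NormedAddGroupHom (H × K) G :=
    (H.subtype.coprod K.subtype).mkNormedAddGroupHom 2 fun p ↦ by
      calc ‖(p.1 : G) + p.2‖ ≤ ‖p.1‖ + ‖p.2‖ := norm_add_le _ _
        _ ≤ 2 * ‖p‖ := by linarith [norm_fst_le p, norm_snd_le p]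
  have hs : s.SurjectiveOnWith (H ⊔ K) C := by
    intro z hz
    obtain ⟨x, hx, y, hy, rfl⟩ := AddSubgroup.mem_sup.1 hz
    obtain ⟨x', hx', y', hy', hsum, hnx, hny⟩ := hdecomp x hx y hy
    exact ⟨(⟨x', hx'⟩, ⟨y', hy'⟩), hsum, max_le hnx hny⟩
  refine isClosed_of_closure_subset fun z hz ↦ ?_
  obtain ⟨p, rfl, -⟩ := controlled_closure_of_complete hC one_pos hs z hz
  exact AddSubgroup.add_mem_sup p.1.2 p.2.2

namespace IsClosedTwoSidedIdeal

variable {A : Type u} [NonUnitalCStarAlgebra A] {I J : Set A}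

-- With `e ∈ J` a local unit for `y`, replace `(x, y)` by `(x - x * e, y + x * e)`, whose second
-- entry is `(y - y * e) + (x + y) * e`.
theorem exists_add_eq_norm_le (hI : IsClosedTwoSidedIdeal I) (hJ : IsClosedTwoSidedIdeal J)
    {x y : A} (hx : x ∈ I) (hy : y ∈ J) :
    ∃ x' ∈ I, ∃ y' ∈ J, x' + y' = x + y ∧ ‖x'‖ ≤ 3 * ‖x + y‖ ∧ ‖y'‖ ≤ 3 * ‖x + y‖ := by
  rcases eq_or_ne (x + y) 0 with h0 | h0
  · exact ⟨0, hI.zero_mem, 0, hJ.zero_mem, by simp [h0]⟩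
  obtain ⟨e, he, -, he_norm, hye⟩ := hJ.exists_mem_norm_sub_mul_le hy (norm_pos_iff.2 h0)
  have hy' : ‖y + x * e‖ ≤ 2 * ‖x + y‖ := by
    calc ‖y + x * e‖ = ‖(y - y * e) + (x + y) * e‖ := by congr 1; noncomm_ring
      _ ≤ ‖y - y * e‖ + ‖x + y‖ * ‖e‖ := (norm_add_le _ _).trans (by gcongr; exact norm_mul_le _ _)
      _ ≤ ‖x + y‖ + ‖x + y‖ * 1 := by gcongr
      _ = 2 * ‖x + y‖ := by ring
  have hx' : ‖x - x * e‖ ≤ 3 * ‖x + y‖ := by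
    calc ‖x - x * e‖ = ‖(x + y) - (y + x * e)‖ := by congr 1; abel
      _ ≤ ‖x + y‖ + ‖y + x * e‖ := norm_sub_le _ _
      _ ≤ 3 * ‖x + y‖ := by linarith
  refine ⟨x - x * e, hI.toAddSubgroup.sub_mem hx (hI.mul_mem_right e hx),
    y + x * e, hJ.add_mem hy (hJ.mul_mem_left x he), by abel, hx', ?_⟩
  linarith [norm_nonneg (x + y)]

theorem isClosed_add (hI : IsClosedTwoSidedIdeal I) (hJ : IsClosedTwoSidedIdeal J) :
    IsClosed (I + J) := by
  have : CompleteSpace hI.toAddSubgroup := hI.isClosed.completeSpace_coe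
  have : CompleteSpace hJ.toAddSubgroup := hJ.isClosed.completeSpace_coe
  have h := isClosed_sup_of_forall_exists_norm_le (H := hI.toAddSubgroup) (K := hJ.toAddSubgroup)
    three_pos fun _ hx _ hy ↦ hI.exists_add_eq_norm_le hJ hx hy
  rwa [AddSubgroup.add_normal] at h

protected theorem add (hI : IsClosedTwoSidedIdeal I) (hJ : IsClosedTwoSidedIdeal J) :
    IsClosedTwoSidedIdeal (I + J) := by
  refine ⟨hI.isClosed_add hJ, ⟨0, hI.zero_mem, 0, hJ.zero_mem, add_zero 0⟩, ?_, ?_, ?_⟩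
  · rintro _ ⟨x, hx, y, hy, rfl⟩ _ ⟨x', hx', y', hy', rfl⟩
    exact ⟨x + x', hI.add_mem hx hx', y + y', hJ.add_mem hy hy', add_add_add_comm ..⟩
  · rintro _ ⟨x, hx, y, hy, rfl⟩
    exact ⟨-x, hI.neg_mem hx, -y, hJ.neg_mem hy, (neg_add x y).symm⟩
  · rintro a _ ⟨x, hx, y, hy, rfl⟩
    exact ⟨⟨a * x, hI.mul_mem_left a hx, a * y, hJ.mul_mem_left a hy, (mul_add a x y).symm⟩,
      ⟨x * a, hI.mul_mem_right a hx, y * a, hJ.mul_mem_right a hy, (add_mul x y a).symm⟩⟩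

end IsClosedTwoSidedIdeal

end SumOfIdeals

section PositiveFunctionals

open scoped ComplexOrder InnerProductSpace ComplexStarModule

variable {B : Type u} [CStarAlgebra B] [PartialOrder B] [StarOrderedRing B] {I : Set B}

theorem norm_map_sq_le_norm_map_one_mul (f : B →ₚ[ℂ] ℂ) (x : B) :
    ‖f x‖ ^ 2 ≤ ‖f 1‖ * ‖f (star x * x)‖ := by
  have norm_sq (y : B) : ‖f.toPreGNS y‖ ^ 2 = ‖f (star y * y)‖ := by
    have h := congrArg norm (f.preGNS_norm_sq (f.toPreGNS y))
    simpa using h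
  have hinner : ⟪f.toPreGNS 1, f.toPreGNS x⟫_ℂ = f x := by
    rw [f.preGNS_inner_def]
    simp
  calc ‖f x‖ ^ 2 ≤ (‖f.toPreGNS 1‖ * ‖f.toPreGNS x‖) ^ 2 := by
        rw [← hinner]
        gcongr
        exact norm_inner_le_norm _ _
    _ = ‖f 1‖ * ‖f (star x * x)‖ := by rw [mul_pow, norm_sq, norm_sq, star_one, one_mul]

theorem norm_map_le_norm_map_one_mul (f : B →ₚ[ℂ] ℂ) (x : B) : ‖f x‖ ≤ ‖f 1‖ * ‖x‖ := by
  refine le_of_sq_le_sq ?_ (by positivity)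
  calc ‖f x‖ ^ 2 ≤ ‖f 1‖ * ‖f (star x * x)‖ := norm_map_sq_le_norm_map_one_mul f x
    _ ≤ ‖f 1‖ * (‖f 1‖ * ‖star x * x‖) := by
        gcongr
        exact f.norm_apply_le_of_nonneg _ (star_mul_self_nonneg x)
    _ = (‖f 1‖ * ‖x‖) ^ 2 := by rw [CStarRing.norm_star_mul_self]; ring

theorem map_eq_zero_of_map_one_eq_zero {f : B →ₚ[ℂ] ℂ} (hf : f 1 = 0) (x : B) : f x = 0 := by
  simpa [hf] using norm_map_le_norm_map_one_mul f x

theorem exists_positiveLinearMap_eq_realPart_add_imaginaryPart_mul_I {A : Type*}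
    [NonUnitalCStarAlgebra A] [PartialOrder A] [StarOrderedRing A] (f : A →ₗ[ℝ] ℝ)
    (hf : ∀ x, 0 ≤ x → 0 ≤ f x) :
    ∃ F : A →ₚ[ℂ] ℂ, ∀ x, F x = f (ℜ x) + f (ℑ x) * Complex.I := by
  let F : Module.Dual ℂ A :=
    Module.Dual.extendRCLike (f ∘ₗ (selfAdjoint.submodule ℝ A).subtype ∘ₗ realPart)
  have hF (x : A) : F x = f (ℜ x) + f (ℑ x) * Complex.I := by
    have : F x = f (ℜ x) - Complex.I * f (ℜ (Complex.I • x)) := rfl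
    rw [this, realPart_I_smul]
    simp [mul_comm]
  refine ⟨.mk₀ F fun x hx ↦ ?_, hF⟩
  rw [hF, (IsSelfAdjoint.of_nonneg hx).imaginaryPart, (IsSelfAdjoint.of_nonneg hx).coe_realPart]
  simpa using hf x hx

end PositiveFunctionals

section Separation

open scoped ComplexOrder ComplexStarModule

namespace IsClosedTwoSidedIdeal

/-- A closed two-sided ideal, seen as a closed convex cone. -/
def toProperCone {A : Type u} [NonUnitalCStarAlgebra A] {I : Set A}
    (hI : IsClosedTwoSidedIdeal I) : ProperCone ℝ A where
  carrier := I
  add_mem' := hI.add_mem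
  zero_mem' := hI.zero_mem
  smul_mem' c x hx := by
    have : c • x = ((c : ℝ) : ℂ) • x := (Complex.coe_smul (c : ℝ) x).symm
    exact this ▸ hI.smul_mem _ hx
  isClosed' := hI.isClosed

variable {B : Type u} [CStarAlgebra B] [PartialOrder B] [StarOrderedRing B] {I : Set B}

-- Conjugating by `1 - e`, with `e ∈ I` a local unit for `i`, almost kills `i` in
-- `b + p + i ≈ 0`, hence also `b ≤ b + p`; and `b` is congruent to its conjugate modulo `I`.
theorem mem_of_neg_mem_positive_sup (hI : IsClosedTwoSidedIdeal I) {b : B} (hb : 0 ≤ b)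
    (h : -b ∈ ProperCone.positive ℝ B ⊔ hI.toProperCone) : b ∈ I := by
  refine hI.mem_of_forall_exists_norm_sub_le fun ε hε ↦ ?_
  obtain ⟨y, hy, hdist⟩ := Metric.mem_closure_iff.1 (ClosedSubmodule.mem_sup.1 h) (ε / 6)
    (by positivity)
  obtain ⟨p, hp, i, hi, rfl⟩ := Submodule.mem_sup.1 hy
  obtain ⟨e, he, he_sa, he_norm, hie⟩ :=
    hI.exists_mem_norm_sub_mul_le hi (ε := ε / 6) (by positivity)
  refine ⟨e * b + (b - e * b) * e, hI.add_mem (hI.mul_mem_right b he) (hI.mul_mem_left _ he), ?_⟩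
  set u := 1 - e with hu
  set z := -b - (p + i) with hz
  have hz_norm : ‖z‖ ≤ ε / 6 := (dist_eq_norm (-b) (p + i) ▸ hdist).le
  have hu_sa : IsSelfAdjoint u := .sub (.one B) he_sa
  have hu_norm : ‖u‖ ≤ 2 := by
    have : ‖(1 : B)‖ ≤ 1 := by
      rcases subsingleton_or_nontrivial B with _ | _
      · simp [Subsingleton.elim (1 : B) 0]
      · exact CStarRing.norm_one.le
    linarith [norm_sub_le 1 e]
  calc ‖b - (e * b + (b - e * b) * e)‖ = ‖u * b * u‖ := by rw [hu]; congr 1; noncomm_ring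
    _ ≤ ‖u * (b + p) * u‖ :=
        CStarAlgebra.norm_le_norm_of_nonneg_of_le (hu_sa.conjugate_nonneg hb)
          (hu_sa.conjugate_le_conjugate (le_add_of_nonneg_right hp))
    _ = ‖u * z * u + u * (i - i * e)‖ := by
        rw [← norm_neg, hu, hz]; congr 1; noncomm_ring
    _ ≤ ‖u‖ * ‖z‖ * ‖u‖ + ‖u‖ * ‖i - i * e‖ := by
        refine (norm_add_le _ _).trans (add_le_add ?_ (norm_mul_le _ _))
        exact (norm_mul_le _ _).trans (by gcongr; exact norm_mul_le _ _)
    _ ≤ 2 * (ε / 6) * 2 + 2 * (ε / 6) := by gcongr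
    _ = ε := by ring

theorem exists_strongDual_pos (hI : IsClosedTwoSidedIdeal I) {b : B} (hb : 0 ≤ b) (hbI : b ∉ I) :
    ∃ f : StrongDual ℝ B, (∀ x, 0 ≤ x → 0 ≤ f x) ∧ (∀ i ∈ I, f i = 0) ∧ 0 < f b := by
  obtain ⟨f, hf, hfb⟩ := ProperCone.hyperplane_separation_point _
    fun h ↦ hbI (hI.mem_of_neg_mem_positive_sup hb h)
  have hf_nonneg_of_mem {i : B} (hi : i ∈ I) : 0 ≤ f i := hf i <|
    (le_sup_right : hI.toProperCone ≤ ProperCone.positive ℝ B ⊔ hI.toProperCone) hi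
  refine ⟨f, fun x hx ↦ hf x ?_, fun i hi ↦ le_antisymm ?_ (hf_nonneg_of_mem hi), ?_⟩
  · exact (le_sup_left : _ ≤ ProperCone.positive ℝ B ⊔ hI.toProperCone) hx
  · simpa using hf_nonneg_of_mem (hI.neg_mem hi)
  · simpa using hfb

theorem exists_positiveLinearMap_ne_zero (hI : IsClosedTwoSidedIdeal I) {b : B} (hb : 0 ≤ b)
    (hbI : b ∉ I) : ∃ f : B →ₚ[ℂ] ℂ, (∀ i ∈ I, f i = 0) ∧ f b ≠ 0 := by
  obtain ⟨f, hf, hfI, hfb⟩ := hI.exists_strongDual_pos hb hbI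
  obtain ⟨F, hF⟩ := exists_positiveLinearMap_eq_realPart_add_imaginaryPart_mul_I f.toLinearMap hf
  refine ⟨F, fun i hi ↦ ?_, ?_⟩
  · simp [hF, hfI _ (hI.realPart_mem hi), hfI _ (hI.imaginaryPart_mem hi)]
  · have hb_sa := IsSelfAdjoint.of_nonneg hb
    simpa [hF, hb_sa.coe_realPart, hb_sa.imaginaryPart] using hfb.ne'

end IsClosedTwoSidedIdeal

end Separation

section PureFunctionals

open scoped ComplexOrder

/-- A positive functional is pure if every positive functional that it dominates is a multiple of
it. The zero functional is not excluded. -/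
def IsPureFunctional {A : Type*} [NonUnitalCStarAlgebra A] [PartialOrder A] (f : A →ₚ[ℂ] ℂ) :
    Prop :=
  ∀ g : A →ₚ[ℂ] ℂ, (∀ x, 0 ≤ x → g x ≤ f x) → ∃ t : ℝ, ∀ x, g x = t * f x

variable {B : Type u} [CStarAlgebra B] [PartialOrder B] [StarOrderedRing B] {I : Set B}

/-- The states of `B` that vanish on `I`, as a set of plain functions: this makes the topology of
pointwise convergence and its convexity theory available. -/
def annihilatingStates (I : Set B) : Set (B → ℂ) :=
  {φ | ∃ f : B →ₚ[ℂ] ℂ, ⇑f = φ ∧ f 1 = 1 ∧ ∀ i ∈ I, f i = 0}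

theorem annihilatingStates_eq (I : Set B) :
    annihilatingStates I = Set.range ((↑) : (B →ₗ[ℂ] ℂ) → B → ℂ) ∩
      {φ | (∀ x, 0 ≤ x → 0 ≤ φ x) ∧ φ 1 = 1 ∧ ∀ i ∈ I, φ i = 0} := by
  ext φ
  constructor
  · rintro ⟨f, rfl, h1, hI⟩
    exact ⟨⟨f.toLinearMap, rfl⟩, fun _ ↦ f.map_nonneg, h1, hI⟩
  · rintro ⟨⟨f, rfl⟩, hpos, h1, hI⟩
    exact ⟨.mk₀ f hpos, rfl, h1, hI⟩

theorem isClosed_annihilatingStates (I : Set B) : IsClosed (annihilatingStates I) := by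
  rw [annihilatingStates_eq]
  refine (LinearMap.isClosed_range_coe B ℂ (RingHom.id ℂ)).inter ?_
  simp only [Set.ofPred_and, Set.ofPred_forall]
  exact (isClosed_iInter fun x ↦ isClosed_iInter fun _ ↦
      isClosed_le continuous_const (continuous_apply x)).inter <|
    (isClosed_eq (continuous_apply 1) continuous_const).inter <|
      isClosed_iInter fun i ↦ isClosed_iInter fun _ ↦
        isClosed_eq (continuous_apply i) continuous_const

theorem isCompact_annihilatingStates (I : Set B) : IsCompact (annihilatingStates I) := by
  refine (isCompact_univ_pi fun x : B ↦ isCompact_closedBall (0 : ℂ) ‖x‖).of_isClosed_subset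
    (isClosed_annihilatingStates I) ?_
  rintro _ ⟨f, rfl, h1, -⟩ x -
  simpa [h1] using norm_map_le_norm_map_one_mul f x

theorem exists_mem_extremePoints_isMaxOn {E : Type*} [AddCommGroup E] [Module ℝ E]
    [TopologicalSpace E] [T2Space E] [IsTopologicalAddGroup E] [ContinuousSMul ℝ E]
    [LocallyConvexSpace ℝ E] {s : Set E} (hs : IsCompact s) (hne : s.Nonempty)
    (l : StrongDual ℝ E) : ∃ x ∈ s.extremePoints ℝ, IsMaxOn l s x := by
  obtain ⟨z, hz, hmax⟩ := hs.exists_isMaxOn hne l.continuous.continuousOn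
  have hexp : IsExposed ℝ s {z ∈ s | ∀ w ∈ s, l w ≤ l z} := fun _ ↦ ⟨l, rfl⟩
  obtain ⟨x, hx⟩ := (hexp.isCompact hs).extremePoints_nonempty ⟨z, hz, hmax⟩
  exact ⟨x, hexp.isExtreme.extremePoints_subset_extremePoints hx, hx.1.2⟩

theorem div_map_one_mem_annihilatingStates {f : B →ₚ[ℂ] ℂ} (h1 : f 1 ≠ 0)
    (hI : ∀ i ∈ I, f i = 0) : (fun x ↦ f x / f 1) ∈ annihilatingStates I := by
  have hf1 : 0 ≤ (f 1)⁻¹ := inv_nonneg.2 (f.map_nonneg zero_le_one)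
  refine ⟨.mk₀ ((f 1)⁻¹ • f.toLinearMap) fun x hx ↦ mul_nonneg hf1 (f.map_nonneg hx), ?_, ?_, ?_⟩
  · exact funext fun x ↦ (div_eq_inv_mul (f x) (f 1)).symm
  · exact inv_mul_cancel₀ h1
  · exact fun i hi ↦ mul_eq_zero_of_right _ (hI i hi)

theorem map_eq_zero_of_le_of_map_star_mul_self_eq_zero {f g : B →ₚ[ℂ] ℂ}
    (hgf : ∀ x, 0 ≤ x → g x ≤ f x) {x : B} (hx : f (star x * x) = 0) : g x = 0 := by
  have h : g (star x * x) = 0 :=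
    le_antisymm (hx ▸ hgf _ (star_mul_self_nonneg x)) (g.map_nonneg (star_mul_self_nonneg x))
  simpa [h] using norm_map_sq_le_norm_map_one_mul g x

theorem isPureFunctional_of_mem_extremePoints (hI : ∀ i ∈ I, star i * i ∈ I) {f : B →ₚ[ℂ] ℂ}
    (hf : ⇑f ∈ (annihilatingStates I).extremePoints ℝ) : IsPureFunctional f := by
  intro g hgf
  obtain ⟨⟨f', hf', hf1, hfI⟩, hext⟩ := mem_extremePoints.1 hf
  obtain rfl : f' = f := DFunLike.coe_injective hf'
  let h : B →ₚ[ℂ] ℂ := .mk₀ (f'.toLinearMap - g.toLinearMap) fun x hx ↦ sub_nonneg.2 (hgf x hx)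
  have hg_add_h (x : B) : g x + h x = f' x := add_sub_cancel (g x) (f' x)
  have hgI (i : B) (hi : i ∈ I) : g i = 0 :=
    map_eq_zero_of_le_of_map_star_mul_self_eq_zero hgf (hfI _ (hI i hi))
  have hhI (i : B) (hi : i ∈ I) : h i = 0 := by simpa [hgI i hi, hfI i hi] using hg_add_h i
  by_cases hg1 : g 1 = 0
  · exact ⟨0, fun x ↦ by simp [map_eq_zero_of_map_one_eq_zero hg1 x]⟩
  by_cases hh1 : h 1 = 0
  · exact ⟨1, fun x ↦ by simp [← hg_add_h, map_eq_zero_of_map_one_eq_zero hh1 x]⟩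
  have hg1_nonneg : 0 ≤ g 1 := g.map_nonneg zero_le_one
  have hh1_nonneg : 0 ≤ h 1 := h.map_nonneg zero_le_one
  obtain ⟨s, hs⟩ : ∃ s : ℝ, g 1 = s := ⟨_, Complex.eq_re_of_ofReal_le hg1_nonneg⟩
  obtain ⟨t, ht⟩ : ∃ t : ℝ, h 1 = t := ⟨_, Complex.eq_re_of_ofReal_le hh1_nonneg⟩
  have hs_pos : 0 < s := by exact_mod_cast hs ▸ hg1_nonneg.lt_of_ne' hg1
  have ht_pos : 0 < t := by exact_mod_cast ht ▸ hh1_nonneg.lt_of_ne' hh1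
  have hst : s + t = 1 := by exact_mod_cast hs ▸ ht ▸ hf1 ▸ hg_add_h 1
  have hcomb : s • (fun x ↦ g x / g 1) + t • (fun x ↦ h x / h 1) = f' := by
    ext x
    simp [← hg_add_h, ← hs, ← ht, mul_div_cancel₀ _ hg1, mul_div_cancel₀ _ hh1]
  have hgf' := (hext _ (div_map_one_mem_annihilatingStates hg1 hgI) _
    (div_map_one_mem_annihilatingStates hh1 hhI) ⟨s, t, hs_pos, ht_pos, hst, hcomb⟩).1
  exact ⟨s, fun x ↦ by rw [← hgf', ← hs, mul_div_cancel₀ _ hg1]⟩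

theorem IsClosedTwoSidedIdeal.exists_isPureFunctional (hI : IsClosedTwoSidedIdeal I) {b : B}
    (hb : 0 ≤ b) (hbI : b ∉ I) :
    ∃ f : B →ₚ[ℂ] ℂ, IsPureFunctional f ∧ (∀ i ∈ I, f i = 0) ∧ f b ≠ 0 := by
  obtain ⟨f₀, hf₀I, hf₀b⟩ := hI.exists_positiveLinearMap_ne_zero hb hbI
  have hf₀1 : f₀ 1 ≠ 0 := fun h ↦ hf₀b (map_eq_zero_of_map_one_eq_zero h b)
  have hmem := div_map_one_mem_annihilatingStates hf₀1 hf₀I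
  obtain ⟨φ, hφ, hmax⟩ := exists_mem_extremePoints_isMaxOn (isCompact_annihilatingStates I)
    ⟨_, hmem⟩ (Complex.reCLM.comp (ContinuousLinearMap.proj b))
  obtain ⟨f, rfl, -, hfI⟩ := hφ.1
  refine ⟨f, isPureFunctional_of_mem_extremePoints (fun i ↦ hI.mul_mem_left (star i)) hφ, hfI, ?_⟩
  intro hfb
  have hle : (f₀ b / f₀ 1).re ≤ 0 := by simpa [hfb] using hmax hmem
  have hpos : 0 < f₀ b / f₀ 1 := div_pos ((f₀.map_nonneg hb).lt_of_ne' hf₀b)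
    ((f₀.map_nonneg zero_le_one).lt_of_ne' hf₀1)
  exact hle.not_gt (Complex.lt_def.1 hpos).1

end PureFunctionals

section Representations

open scoped ComplexOrder InnerProductSpace

variable {A H : Type*} [NonUnitalCStarAlgebra A] [NormedAddCommGroup H] [InnerProductSpace ℂ H]
  [CompleteSpace H] (π : A →⋆ₙₐ[ℂ] (H →L[ℂ] H))

/-- A `*`-representation is topologically irreducible if it has no closed invariant subspaces other
than `⊥` and `⊤`. The zero representation on a space of dimension at most one is not excluded. -/
def IsTopologicallyIrreducible : Prop :=
  ∀ K : Submodule ℂ H, IsClosed (K : Set H) → (∀ a : A, ∀ x ∈ K, π a x ∈ K) → K = ⊥ ∨ K = ⊤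

theorem inner_starHom_apply_left (a : A) (x y : H) : ⟪π a x, y⟫_ℂ = ⟪x, π (star a) y⟫_ℂ := by
  rw [map_star, ContinuousLinearMap.star_eq_adjoint, ContinuousLinearMap.adjoint_inner_right]

theorem inner_starHom_star_mul_self_apply (a : A) (x : H) :
    ⟪x, π (star a * a) x⟫_ℂ = (‖π a x‖ ^ 2 : ℝ) := by
  rw [map_mul, mul_apply_eq_comp, ← inner_starHom_apply_left,
    inner_self_eq_norm_sq_to_K]
  simp

variable {π} in
theorem starProjection_starHom_apply {K : Submodule ℂ H} [K.HasOrthogonalProjection]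
    (hK : ∀ a : A, ∀ x ∈ K, π a x ∈ K) (a : A) (x : H) :
    K.starProjection (π a x) = π a (K.starProjection x) := by
  refine Submodule.eq_starProjection_of_mem_orthogonal (u := π a x)
    (hK a _ (Submodule.starProjection_apply_mem K x)) fun y hy ↦ ?_
  rw [← map_sub, ← star_star a, ← inner_starHom_apply_left]
  exact Submodule.sub_starProjection_mem_orthogonal x _ (hK (star a) y hy)

section

variable [PartialOrder A] [StarOrderedRing A]

/-- The positive functional `a ↦ ⟪η, π a η⟫`. -/
noncomputable def vectorFunctional (η : H) : A →ₚ[ℂ] ℂ :=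
  .mk₀ { toFun := fun a ↦ ⟪η, π a η⟫_ℂ
         map_add' := by simp
         map_smul' := by simp } fun a ha ↦ by
    obtain ⟨b, rfl⟩ := CStarAlgebra.nonneg_iff_eq_star_mul_self.1 ha
    change 0 ≤ ⟪η, π (star b * b) η⟫_ℂ
    rw [inner_starHom_star_mul_self_apply]
    exact_mod_cast sq_nonneg ‖π b η‖

theorem vectorFunctional_apply (η : H) (a : A) : vectorFunctional π η a = ⟪η, π a η⟫_ℂ := rfl

theorem vectorFunctional_le {η ζ : H} (h : ∀ a, ‖π a η‖ ≤ ‖π a ζ‖) {a : A} (ha : 0 ≤ a) :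
    vectorFunctional π η a ≤ vectorFunctional π ζ a := by
  obtain ⟨b, rfl⟩ := CStarAlgebra.nonneg_iff_eq_star_mul_self.1 ha
  simp only [vectorFunctional_apply, inner_starHom_star_mul_self_apply]
  exact_mod_cast pow_le_pow_left₀ (norm_nonneg _) (h b) 2

variable {π}

theorem starHom_apply_eq_zero_of_vectorFunctional_eq_zero {ξ : H}
    (hξ : DenseRange fun a ↦ π a ξ) {a : A}
    (h : ∀ b, vectorFunctional π ξ (star (a * b) * (a * b)) = 0) : π a = 0 := by
  refine DFunLike.coe_injective (hξ.equalizer (π a).continuous continuous_const (funext fun b ↦ ?_))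
  have hab : ‖π (a * b) ξ‖ ^ 2 = 0 := by
    have := h b
    rwa [vectorFunctional_apply, inner_starHom_star_mul_self_apply, Complex.ofReal_eq_zero] at this
  simpa using hab

-- For the projection `p` onto an invariant subspace, the vector functional of `p ξ` is dominated by
-- that of `ξ`; if it is `t` times the latter, then `p` is multiplication by `t`.
theorem IsPureFunctional.isTopologicallyIrreducible {ξ : H} (hξ : DenseRange fun a ↦ π a ξ)
    (hpure : IsPureFunctional (vectorFunctional π ξ)) : IsTopologicallyIrreducible π := by
  intro K hK_closed hK
  have : CompleteSpace K := hK_closed.completeSpace_coe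
  set p := K.starProjection
  have hcomm (a : A) (x : H) : p (π a x) = π a (p x) := starProjection_starHom_apply hK a x
  obtain ⟨t, ht⟩ := hpure (vectorFunctional π (p ξ)) fun a ↦ vectorFunctional_le π fun b ↦ by
    rw [← hcomm]
    exact K.norm_starProjection_apply_le _
  have hpξ : p ξ = (t : ℂ) • ξ := by
    refine hξ.eq_of_inner_left ℂ fun a ↦ ?_
    calc ⟪p ξ, π a ξ⟫_ℂ = ⟪p ξ, π a (p ξ)⟫_ℂ := by
          rw [← hcomm, ← K.inner_starProjection_left_eq_right,
            Submodule.starProjection_eq_self_iff.2 (K.starProjection_apply_mem ξ)]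
      _ = t * ⟪ξ, π a ξ⟫_ℂ := ht a
      _ = ⟪(t : ℂ) • ξ, π a ξ⟫_ℂ := by simp
  have hp (x : H) : p x = (t : ℂ) • x :=
    congrFun (hξ.equalizer p.continuous (continuous_const_smul (t : ℂ)) <| funext fun a ↦ by
      simp [hcomm, hpξ]) x
  rcases eq_or_ne (t : ℂ) 0 with h0 | h0
  · refine .inl ((Submodule.eq_bot_iff K).2 fun x hx ↦ ?_)
    rw [← Submodule.starProjection_eq_self_iff.2 hx, hp, h0, zero_smul]
  · refine .inr (Submodule.eq_top_iff'.2 fun x ↦ ?_)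
    rw [← inv_smul_smul₀ h0 x, ← hp]
    exact K.smul_mem _ (K.starProjection_apply_mem x)

end

end Representations

section GNS

variable {B : Type u} [CStarAlgebra B] [PartialOrder B] [StarOrderedRing B]

open scoped ComplexOrder InnerProductSpace

theorem gnsStarAlgHom_apply_toPreGNS_one (f : B →ₚ[ℂ] ℂ) (b : B) :
    f.gnsStarAlgHom b (f.toPreGNS 1 : f.PreGNS) = (f.toPreGNS b : f.PreGNS) := by
  simp

theorem denseRange_gnsStarAlgHom_apply_toPreGNS_one (f : B →ₚ[ℂ] ℂ) :
    DenseRange fun b ↦ f.gnsStarAlgHom b (f.toPreGNS 1 : f.PreGNS) := by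
  simp only [gnsStarAlgHom_apply_toPreGNS_one]
  exact UniformSpace.Completion.denseRange_coe.comp f.toPreGNS.surjective.denseRange
    (UniformSpace.Completion.continuous_coe _)

theorem vectorFunctional_gnsStarAlgHom (f : B →ₚ[ℂ] ℂ) :
    vectorFunctional (f.gnsStarAlgHom : B →⋆ₙₐ[ℂ] (f.GNS →L[ℂ] f.GNS))
      (f.toPreGNS 1 : f.PreGNS) = f := by
  ext b
  have h : ⟪((f.toPreGNS 1 : f.PreGNS) : f.GNS), (f.toPreGNS b : f.PreGNS)⟫_ℂ = f b := by
    rw [UniformSpace.Completion.inner_coe, f.preGNS_inner_def]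
    simp
  exact (congrArg _ (gnsStarAlgHom_apply_toPreGNS_one f b)).trans h

end GNS

section PrimitiveIdeals

namespace IsClosedTwoSidedIdeal

theorem image_inr {A : Type u} [NonUnitalCStarAlgebra A] {I : Set A}
    (hI : IsClosedTwoSidedIdeal I) :
    IsClosedTwoSidedIdeal ((Unitization.inr : A → Unitization ℂ A) '' I) := by
  refine ⟨?_, ⟨0, hI.zero_mem, Unitization.inr_zero ℂ⟩, ?_, ?_, ?_⟩
  · exact (Unitization.isometry_inr (𝕜 := ℂ)).isClosedEmbedding.isClosed_iff_image_isClosed.1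
      hI.isClosed
  · rintro _ ⟨x, hx, rfl⟩ _ ⟨y, hy, rfl⟩
    exact ⟨x + y, hI.add_mem hx hy, Unitization.inr_add ℂ x y⟩
  · rintro _ ⟨x, hx, rfl⟩
    exact ⟨-x, hI.neg_mem hx, Unitization.inr_neg ℂ x⟩
  · rintro b _ ⟨x, hx, rfl⟩
    induction b using Unitization.ind with
    | inl_add_inr c a =>
      exact ⟨⟨c • x + a * x, hI.add_mem (hI.smul_mem c hx) (hI.mul_mem_left a hx),
          by simp [add_mul, Unitization.inl_mul_inr]⟩,
        ⟨c • x + x * a, hI.add_mem (hI.smul_mem c hx) (hI.mul_mem_right a hx),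
          by simp [mul_add, Unitization.inr_mul_inl]⟩⟩

end IsClosedTwoSidedIdeal

theorem IsTopologicallyIrreducible.comp_inr {A H : Type*} [NonUnitalCStarAlgebra A]
    [NormedAddCommGroup H] [InnerProductSpace ℂ H] [CompleteSpace H]
    {π : Unitization ℂ A →⋆ₐ[ℂ] (H →L[ℂ] H)}
    (hπ : IsTopologicallyIrreducible (π : Unitization ℂ A →⋆ₙₐ[ℂ] (H →L[ℂ] H))) :
    IsTopologicallyIrreducible ((π : Unitization ℂ A →⋆ₙₐ[ℂ] (H →L[ℂ] H)).comp
      (Unitization.inrNonUnitalStarAlgHom ℂ A)) := by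
  refine fun K hK_closed hK ↦ hπ K hK_closed fun b x hx ↦ ?_
  induction b using Unitization.ind with
  | inl_add_inr c a =>
    have hc : π (Unitization.inl c) = algebraMap ℂ _ c := AlgHomClass.commutes π c
    have : π (Unitization.inl c + (a : Unitization ℂ A)) x = c • x + π a x := by
      rw [map_add, hc, Algebra.algebraMap_eq_smul_one]
      rfl
    exact this ▸ K.add_mem (K.smul_mem c hx) (hK a x hx)

namespace IsClosedTwoSidedIdeal

open scoped ComplexOrder

theorem exists_isTopologicallyIrreducible {B : Type u} [CStarAlgebra B] {I : Set B}
    (hI : IsClosedTwoSidedIdeal I) {b : B} (hb : b ∉ I) :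
    ∃ (H : Type u) (_ : NormedAddCommGroup H) (_ : InnerProductSpace ℂ H) (_ : CompleteSpace H)
      (π : B →⋆ₐ[ℂ] (H →L[ℂ] H)),
      IsTopologicallyIrreducible (π : B →⋆ₙₐ[ℂ] (H →L[ℂ] H)) ∧ (∀ i ∈ I, π i = 0) ∧ π b ≠ 0 := by
  let : PartialOrder B := CStarAlgebra.spectralOrder B
  have : StarOrderedRing B := CStarAlgebra.spectralOrderedRing B
  obtain ⟨f, hpure, hfI, hfb⟩ := hI.exists_isPureFunctional (star_mul_self_nonneg b)
    (mt hI.mem_of_star_mul_self_mem hb)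
  have hvec := vectorFunctional_gnsStarAlgHom f
  have hcyclic := denseRange_gnsStarAlgHom_apply_toPreGNS_one f
  refine ⟨f.GNS, inferInstance, inferInstance, inferInstance, f.gnsStarAlgHom, ?_, ?_, ?_⟩
  · exact (hvec.symm ▸ hpure).isTopologicallyIrreducible hcyclic
  · refine fun i hi ↦ starHom_apply_eq_zero_of_vectorFunctional_eq_zero
      (π := (f.gnsStarAlgHom : B →⋆ₙₐ[ℂ] (f.GNS →L[ℂ] f.GNS))) hcyclic fun c ↦ ?_
    rw [hvec]
    exact hfI _ (hI.mul_mem_left _ (hI.mul_mem_right c hi))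
  · intro h0
    rw [← hvec, vectorFunctional_apply, inner_starHom_star_mul_self_apply] at hfb
    exact hfb (by simp [h0])

variable {A : Type u} [NonUnitalCStarAlgebra A] {I S : Set A}

theorem exists_isPrimitiveIdeal_notMem (hI : IsClosedTwoSidedIdeal I) {a : A} (ha : a ∉ I) :
    ∃ P, IsPrimitiveIdeal A P ∧ I ⊆ P ∧ a ∉ P := by
  have ha' : (a : Unitization ℂ A) ∉ Unitization.inr '' I :=
    mt Unitization.inr_injective.mem_set_image.1 ha
  obtain ⟨H, _, _, _, π, hirr, hπI, hπa⟩ := hI.image_inr.exists_isTopologicallyIrreducible ha'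
  exact ⟨{x : A | π x = 0}, ⟨⟨H, _, ⟨a, hπa⟩, hirr.comp_inr, rfl⟩⟩,
    fun i hi ↦ hπI _ ⟨i, hi, rfl⟩, hπa⟩

theorem subset_of_forall_isPrimitiveIdeal (hI : IsClosedTwoSidedIdeal I)
    (h : ∀ P, IsPrimitiveIdeal A P → I ⊆ P → S ⊆ P) : S ⊆ I := by
  intro a ha
  by_contra haI
  obtain ⟨P, hP, hIP, haP⟩ := hI.exists_isPrimitiveIdeal_notMem haI
  exact haP (h P hP hIP ha)

end IsClosedTwoSidedIdeal

theorem IsPrimitiveIdeal.add_subset {A : Type u} [NonUnitalCStarAlgebra A] {P S T : Set A}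
    (hP : IsPrimitiveIdeal A P) (hS : S ⊆ P) (hT : T ⊆ P) : S + T ⊆ P := by
  obtain ⟨w⟩ := hP
  simp only [w.ker_eq] at hS hT ⊢
  rintro _ ⟨x, hx, y, hy, rfl⟩
  exact (map_add w.π x y).trans (by rw [hS hx, hT hy, add_zero])

end PrimitiveIdeals

theorem subquotients_of_equal_locally_closed_subsets_general
    {A : Type u} [NonUnitalCStarAlgebra A] {I₁ J₁ I₂ J₂ : Set A}
    (hI₁ : IsClosedTwoSidedIdeal I₁) (hJ₁ : IsClosedTwoSidedIdeal J₁)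
    (hI₂ : IsClosedTwoSidedIdeal I₂) (h₁ : I₁ ⊆ J₁) (h₂ : I₂ ⊆ J₂)
    (hPrim : ∀ P : Set A, IsPrimitiveIdeal A P →
      ((¬ J₁ ⊆ P ∧ I₁ ⊆ P) ↔ (¬ J₂ ⊆ P ∧ I₂ ⊆ P))) :
    J₁ + J₂ = J₁ + I₂ ∧ I₁ = (I₁ + I₂) ∩ J₁ ∧
      (∀ x ∈ J₁ + J₂, ∃ y ∈ J₁, x - y ∈ I₁ + I₂) ∧
      (∀ y ∈ J₁, (y ∈ I₁ + I₂ ↔ y ∈ I₁)) := by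
  have hsub_left {S : Set A} : S ⊆ S + I₂ := Set.subset_add_left S hI₂.zero_mem
  have hJ₂_sub : J₂ ⊆ J₁ + I₂ := (hJ₁.add hI₂).subset_of_forall_isPrimitiveIdeal fun P hP h ↦ by
    have hJ₁P : J₁ ⊆ P := hsub_left.trans h
    have hI₂P : I₂ ⊆ P := (Set.subset_add_right I₂ hJ₁.zero_mem).trans h
    by_contra hJ₂P
    exact ((hPrim P hP).2 ⟨hJ₂P, hI₂P⟩).1 hJ₁P
  have hinter : (I₁ + I₂) ∩ J₁ ⊆ I₁ := hI₁.subset_of_forall_isPrimitiveIdeal fun P hP hI₁P ↦ by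
    by_cases hJ₁P : J₁ ⊆ P
    · exact Set.inter_subset_right.trans hJ₁P
    · exact Set.inter_subset_left.trans (hP.add_subset hI₁P ((hPrim P hP).1 ⟨hJ₁P, hI₁P⟩).2)
  have hsum : J₁ + J₂ = J₁ + I₂ := by
    refine Set.Subset.antisymm ?_ (Set.add_subset_add_left h₂)
    rintro _ ⟨x, hx, y, hy, rfl⟩
    exact (hJ₁.add hI₂).add_mem (hsub_left hx) (hJ₂_sub hy)
  refine ⟨hsum, (Set.subset_inter hsub_left h₁).antisymm hinter, fun x hx ↦ ?_, fun y hy ↦ ?_⟩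
  · obtain ⟨y, hy, i, hi, rfl⟩ := hsum ▸ hx
    exact ⟨y, hy, by simpa using Set.subset_add_right I₂ hI₁.zero_mem hi⟩
  · exact ⟨fun h ↦ hinter ⟨h, hy⟩, fun h ↦ hsub_left h⟩

/-- Suppose `I₁ ⊆ J₁` and `I₂ ⊆ J₂` are closed two-sided ideals of `A` such that the
locally closed subsets `U_{J₁} \ U_{I₁}` and `U_{J₂} \ U_{I₂}` of `Prim A` coincide,
where `U_I = {P ∈ Prim A : I ⊄ P}`.  Then `J₁ + J₂ = J₁ + I₂` and
`I₁ = (I₁ + I₂) ∩ J₁`; consequently the inclusion `J₁ ↪ J₁ + J₂` induces an isomorphism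
`J₁/I₁ ≅ (J₁+J₂)/(I₁+I₂)` (concretely: the induced map is surjective with kernel `I₁`). -/
theorem subquotients_of_equal_locally_closed_subsets
    {A : Type u} [NonUnitalCStarAlgebra A]
    (I₁ J₁ I₂ J₂ : Set A)
    (hI₁ : IsClosedTwoSidedIdeal I₁) (hJ₁ : IsClosedTwoSidedIdeal J₁)
    (hI₂ : IsClosedTwoSidedIdeal I₂) (hJ₂ : IsClosedTwoSidedIdeal J₂)
    (h₁ : I₁ ⊆ J₁) (h₂ : I₂ ⊆ J₂)
    (hPrim : ∀ P : Set A, IsPrimitiveIdeal A P →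
      ((¬ J₁ ⊆ P ∧ I₁ ⊆ P) ↔ (¬ J₂ ⊆ P ∧ I₂ ⊆ P))) :
    J₁ + J₂ = J₁ + I₂ ∧ I₁ = (I₁ + I₂) ∩ J₁ ∧
      (∀ x ∈ J₁ + J₂, ∃ y ∈ J₁, x - y ∈ I₁ + I₂) ∧
      (∀ y ∈ J₁, (y ∈ I₁ + I₂ ↔ y ∈ I₁)) := by
  exact subquotients_of_equal_locally_closed_subsets_general hI₁ hJ₁ hI₂ h₁ h₂ hPrim
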